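/- The layout [P 1 2, V, V] is valid but not deserializable: Len 1 (equivalently, Len 2) is not derivable for it, even though both varfield positions lie in the range of the pointer P 1 2. -/

import Mathlib

/-- A layout item: fixed-length field, variable-length field, or pointer `P o s`
with offset `o` and span `s`. -/
inductive Item : Type where
  | F : Item
  | V : Item
  | P : ℕ → ℕ → Item
deriving DecidableEq

/-- A layout is valid if every pointer `P o s` occurring in it satisfies
`o < |ℓ|` and `s ≤ |ℓ| - o`. -/
def ValidLayout (ℓ : List Item) : Prop :=
  ∀ o s : ℕ, Item.P o s ∈ ℓ → o < ℓ.length ∧ s ≤ ℓ.length - o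

/-- Facts the parser can know about positions of the layout. -/
inductive ParseFact : Type where
  | Beg : ℕ → ParseFact
  | Len : ℕ → ParseFact
  | Val : ℕ → ParseFact
deriving DecidableEq

/-- The smallest set of facts closed under the parser's inference rules. -/
inductive Derivable (ℓ : List Item) : ParseFact → Prop where
  | begin : Derivable ℓ (.Beg 0)
  | fieldF (i : ℕ) : ℓ[i]? = some .F → Derivable ℓ (.Len i)
  | fieldP (i o s : ℕ) : ℓ[i]? = some (.P o s) → Derivable ℓ (.Len i)
  | forwardVal (i : ℕ) : Derivable ℓ (.Beg i) → Derivable ℓ (.Len i) → Derivable ℓ (.Val i)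
  | forwardBeg (i : ℕ) : Derivable ℓ (.Beg i) → Derivable ℓ (.Len i) → Derivable ℓ (.Beg (i+1))
  | backwardBeg (i : ℕ) : Derivable ℓ (.Beg (i+1)) → Derivable ℓ (.Len i) → Derivable ℓ (.Beg i)
  | backwardVal (i : ℕ) : Derivable ℓ (.Beg (i+1)) → Derivable ℓ (.Len i) → Derivable ℓ (.Val i)
  | join (i : ℕ) : Derivable ℓ (.Beg i) → Derivable ℓ (.Beg (i+1)) → Derivable ℓ (.Len i)
  | jumpRight (i o s : ℕ) : ℓ[i]? = some (.P o s) → Derivable ℓ (.Val i) →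
      Derivable ℓ (.Beg o) → Derivable ℓ (.Beg (o+s))
  | jumpLeft (i o s : ℕ) : ℓ[i]? = some (.P o s) → Derivable ℓ (.Val i) →
      Derivable ℓ (.Beg (o+s)) → Derivable ℓ (.Beg o)

/-- A layout is deserializable if the length of every varfield is derivable. -/
def Deserializable (ℓ : List Item) : Prop :=
  ∀ j : ℕ, ℓ[j]? = some Item.V → Derivable ℓ (.Len j)

/-- Invariant: an overapproximation of the facts derivable for the layout. -/
def TwoVInv : ParseFact → Prop
  | .Beg i => i = 0 ∨ i = 1 ∨ i = 3
  | .Len i => i = 0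
  | .Val i => i = 0

theorem twoV_getF (i : ℕ) : [Item.P 1 2, Item.V, Item.V][i]? ≠ some Item.F := by
  rcases i with _ | _ | _ | i <;> simp

theorem twoV_getP (i o s : ℕ) (h : [Item.P 1 2, Item.V, Item.V][i]? = some (Item.P o s)) :
    i = 0 ∧ o = 1 ∧ s = 2 := by
  rcases i with _ | _ | _ | i <;> simp at h
  omega

theorem twoV_inv (f : ParseFact) (h : Derivable [Item.P 1 2, Item.V, Item.V] f) :
    TwoVInv f := by
  induction h with
  | begin => simp [TwoVInv]
  | fieldF i h => exact absurd h (twoV_getF i)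
  | fieldP i o s h => exact (twoV_getP i o s h).1
  | forwardVal i _ _ h1 h2 => exact h2
  | forwardBeg i _ _ h1 h2 => simp only [TwoVInv] at *; omega
  | backwardBeg i _ _ h1 h2 => simp only [TwoVInv] at *; omega
  | backwardVal i _ _ h1 h2 => exact h2
  | join i _ _ h1 h2 => simp only [TwoVInv] at *; omega
  | jumpRight i o s h _ _ h1 h2 =>
    have := twoV_getP i o s h
    simp only [TwoVInv] at *; omega
  | jumpLeft i o s h _ _ h1 h2 =>
    have := twoV_getP i o s h
    simp only [TwoVInv] at *; omega

/-- The layout `[P 1 2, V, V]` is valid but not deserializable: neither `Len 1`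
nor `Len 2` is derivable for it, even though both varfield positions lie in the
range of the pointer `P 1 2`. -/
theorem two_varfields_one_pointer_not_deserializable :
    ValidLayout [Item.P 1 2, Item.V, Item.V] ∧
    ¬ Derivable [Item.P 1 2, Item.V, Item.V] (.Len 1) ∧
    ¬ Derivable [Item.P 1 2, Item.V, Item.V] (.Len 2) ∧
    (∀ j : ℕ, [Item.P 1 2, Item.V, Item.V][j]? = some Item.V → 1 ≤ j ∧ j < 1 + 2) ∧
    ¬ Deserializable [Item.P 1 2, Item.V, Item.V] := by
  have n1 : ¬ Derivable [Item.P 1 2, Item.V, Item.V] (.Len 1) := fun h => by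
    have := twoV_inv _ h
    simp [TwoVInv] at this
  have n2 : ¬ Derivable [Item.P 1 2, Item.V, Item.V] (.Len 2) := fun h => by
    have := twoV_inv _ h
    simp [TwoVInv] at this
  refine ⟨?_, n1, n2, ?_, fun h => n1 (h 1 rfl)⟩
  · intro o s h
    simp at h
    obtain ⟨rfl, rfl⟩ := h
    simp
  · intro j h
    rcases j with _ | _ | _ | j <;> simp at h ⊢
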